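/- arXiv:0809.1450 — 3 statements merged into one kernel-verified Lean document; each statement's English description precedes it below -/
import Mathlib

section
/- Let p be a prime and n, k natural numbers with k ≤ n, and let e denote the last standard basis vector (0,…,0,1) of the vector space (ZMod p)^{n+1} over the field ZMod p. The number of k-dimensional linear subspaces L of (ZMod p)^{n+1} with e ∉ L equals p^k · G(k,n), where G(k,n) = ∏_{j=1}^{k} (p^{n-j+1} − 1)/(p^j − 1). -/
/-!
The proof double counts the `k`-tuples `v` of vectors such that `(e, v₁, …, v_k)` is linearly
independent over a field with `q` elements. Choosing the vectors one after the other, each outside the span of `e` and its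
predecessors, gives `∏_{i<k} (q^(n+1) - q^(i+1))` of them (`card_linearIndependent_finCons`).
On the other hand such a tuple is the same as a `k`-dimensional subspace `L` with `e ∉ L` together
with an ordered basis of `L`, and every `L` has `∏_{i<k} (q^k - q^i)` ordered bases
(`card_avoiding_mul`). Dividing and
cancelling powers of `q` gives the formula.
-/

open Module

section Avoiding

variable {K V : Type*} [Field K] [AddCommGroup V] [Module K V]

/-- A `(k+1)`-tuple independent together with `e` is a `k`-tuple independent together with `e`,
followed by a vector outside the span of both. -/
noncomputable def finConsSnocEquiv (e : V) (k : ℕ) :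
    {v : Fin (k + 1) → V // LinearIndependent K (Fin.cons e v : Fin (k + 2) → V)} ≃
      Σ s : {v : Fin k → V // LinearIndependent K (Fin.cons e v : Fin (k + 1) → V)},
        {x : V // x ∉ Submodule.span K (Set.range (Fin.cons e s.1 : Fin (k + 1) → V))} :=
  have key (v : Fin k → V) (x : V) :
      LinearIndependent K (Fin.cons e (Fin.snoc v x : Fin (k + 1) → V) : Fin (k + 2) → V) ↔
        LinearIndependent K (Fin.cons e v : Fin (k + 1) → V) ∧
          x ∉ Submodule.span K (Set.range (Fin.cons e v : Fin (k + 1) → V)) := by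
    rw [Fin.cons_snoc_eq_snoc_cons, linearIndependent_finSnoc]
  have key' (v : Fin (k + 1) → V) (hv : LinearIndependent K (Fin.cons e v : Fin (k + 2) → V)) :=
    (key (Fin.init v) (v (Fin.last k))).1 (by rwa [Fin.snoc_init_self])
  { toFun v := ⟨⟨Fin.init v.1, (key' v.1 v.2).1⟩, ⟨v.1 (Fin.last k), (key' v.1 v.2).2⟩⟩
    invFun s := ⟨Fin.snoc s.1.1 s.2.1, (key _ _).2 ⟨s.1.2, s.2.2⟩⟩
    left_inv v := Subtype.ext (Fin.snoc_init_self v.1)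
    right_inv := by
      rintro ⟨⟨v, hv⟩, ⟨x, hx⟩⟩
      have h : Fin.init (Fin.snoc v x : Fin (k + 1) → V) = v := Fin.init_snoc ..
      have h' : (Fin.snoc v x : Fin (k + 1) → V) (Fin.last k) = x := Fin.snoc_last ..
      refine Sigma.ext (Subtype.ext h) ?_
      dsimp only
      rw [Subtype.heq_iff_coe_eq]
      · exact h'
      · intro y
        rw [h] }

theorem card_notMem_submodule [Finite K] [Finite V] (W : Submodule K V) :
    Nat.card {x : V // x ∉ W} = Nat.card K ^ finrank K V - Nat.card K ^ finrank K W := by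
  classical
  have := Fintype.ofFinite K
  have := Fintype.ofFinite V
  rw [← Module.natCard_eq_pow_finrank (K := K) (V := V),
    ← Module.natCard_eq_pow_finrank (K := K) (V := W)]
  simp only [Nat.card_eq_fintype_card]
  exact Fintype.card_subtype_compl (fun x => x ∈ W)

theorem card_linearIndependent_finCons [Finite K] [Finite V] {e : V} (he : e ≠ 0) (k : ℕ) :
    Nat.card {v : Fin k → V // LinearIndependent K (Fin.cons e v : Fin (k + 1) → V)} =
      ∏ i ∈ Finset.range k, (Nat.card K ^ finrank K V - Nat.card K ^ (i + 1)) := by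
  induction k with
  | zero =>
    have h (v : Fin 0 → V) : LinearIndependent K (Fin.cons e v : Fin 1 → V) :=
      linearIndependent_finCons.2 ⟨linearIndependent_empty_type, by
        simpa [Set.range_eq_empty] using he⟩
    rw [Nat.card_congr (Equiv.subtypeUnivEquiv h)]
    simp
  | succ k ih =>
    have := Fintype.ofFinite
      {v : Fin k → V // LinearIndependent K (Fin.cons e v : Fin (k + 1) → V)}
    have h (s : {v : Fin k → V // LinearIndependent K (Fin.cons e v : Fin (k + 1) → V)}) :
        Nat.card {x : V // x ∉ Submodule.span K (Set.range (Fin.cons e s.1 : Fin (k + 1) → V))} =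
          Nat.card K ^ finrank K V - Nat.card K ^ (k + 1) := by
      rw [card_notMem_submodule, finrank_span_eq_card s.2, Fintype.card_fin]
    rw [Nat.card_congr (finConsSnocEquiv e k), Nat.card_sigma, Finset.prod_range_succ, ← ih,
      Finset.sum_congr rfl fun s _ => h s]
    simp

/-- A tuple independent together with `e` is a subspace avoiding `e` (its span) together with an
ordered basis of that subspace. -/
noncomputable def finConsEquivSubspace [FiniteDimensional K V] (e : V) (k : ℕ) :
    {v : Fin k → V // LinearIndependent K (Fin.cons e v : Fin (k + 1) → V)} ≃
      Σ L : {L : Submodule K V // finrank K L = k ∧ e ∉ L},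
        {w : Fin k → L.1 // LinearIndependent K w} :=
  have span_eq (L : {L : Submodule K V // finrank K L = k ∧ e ∉ L})
      (w : {w : Fin k → L.1 // LinearIndependent K w}) :
      Submodule.span K (Set.range fun i => (w.1 i : V)) = L.1 := by
    have hw : LinearIndependent K fun i => (w.1 i : V) :=
      w.2.map' L.1.subtype (Submodule.ker_subtype _)
    refine Submodule.eq_of_le_of_finrank_eq (Submodule.span_le.2 ?_) ?_
    · rintro _ ⟨i, rfl⟩
      exact (w.1 i).2
    · rw [finrank_span_eq_card hw, Fintype.card_fin, L.2.1]
  { toFun v :=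
      have hv := linearIndependent_finCons.1 v.2
      ⟨⟨Submodule.span K (Set.range v.1), by
          rw [finrank_span_eq_card hv.1, Fintype.card_fin], hv.2⟩,
        ⟨fun i => ⟨v.1 i, Submodule.subset_span ⟨i, rfl⟩⟩, linearIndependent_span hv.1⟩⟩
    invFun s := ⟨fun i => (s.2.1 i : V), linearIndependent_finCons.2
      ⟨s.2.2.map' s.1.1.subtype (Submodule.ker_subtype _), by
        rw [span_eq]
        exact s.1.2.2⟩⟩
    left_inv v := rfl
    right_inv := by
      rintro ⟨L, w⟩
      -- The span of `w` is only propositionally equal to `L`, so the equality of the dependent pairs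
      -- is proved with the subspace generalized to a variable.
      have aux (L' : {L : Submodule K V // finrank K L = k ∧ e ∉ L})
          (w' : {w : Fin k → L'.1 // LinearIndependent K w}) (hL : L' = L)
          (hw : ∀ i, (w'.1 i : V) = w.1 i) :
          (⟨L', w'⟩ : Σ L : {L : Submodule K V // finrank K L = k ∧ e ∉ L},
            {w : Fin k → L.1 // LinearIndependent K w}) = ⟨L, w⟩ := by
        subst hL
        congr 1
        exact Subtype.ext (funext fun i => Subtype.ext (hw i))
      exact aux _ _ (Subtype.ext (span_eq L w)) fun _ => rfl }

/-- The double count: subspaces avoiding `e`, times ordered bases of each. -/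
theorem card_avoiding_mul [Finite K] [Finite V] {e : V} (he : e ≠ 0) (k : ℕ) :
    Nat.card {L : Submodule K V // finrank K L = k ∧ e ∉ L} *
        ∏ i ∈ Finset.range k, (Nat.card K ^ k - Nat.card K ^ i) =
      ∏ i ∈ Finset.range k, (Nat.card K ^ finrank K V - Nat.card K ^ (i + 1)) := by
  have := Fintype.ofFinite K
  have := Fintype.ofFinite {L : Submodule K V // finrank K L = k ∧ e ∉ L}
  have h (L : {L : Submodule K V // finrank K L = k ∧ e ∉ L}) :
      Nat.card {w : Fin k → L.1 // LinearIndependent K w} =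
        ∏ i ∈ Finset.range k, (Nat.card K ^ k - Nat.card K ^ i) := by
    rw [card_linearIndependent L.2.1.ge, L.2.1, ← Nat.card_eq_fintype_card,
      Fin.prod_univ_eq_prod_range (fun i => Nat.card K ^ k - Nat.card K ^ i)]
  rw [← card_linearIndependent_finCons he, Nat.card_congr (finConsEquivSubspace e k),
    Nat.card_sigma, Finset.sum_congr rfl fun L _ => h L]
  simp

end Avoiding

/-- The number of `k`-dimensional linear subspaces `L` of `(ZMod p)^{n+1}` not
containing the last standard basis vector `e = (0,…,0,1)` equals `p^k · G(k,n)`,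
where `G(k,n) = ∏_{j=1}^{k} (p^{n-j+1} − 1)/(p^j − 1)`. -/
theorem stmt_2 (p n k : ℕ) [Fact p.Prime] (hkn : k ≤ n) :
    (Nat.card {L : Submodule (ZMod p) (Fin (n + 1) → ZMod p) //
        Module.finrank (ZMod p) L = k ∧
          Pi.single (Fin.last n) (1 : ZMod p) ∉ L} : ℚ) =
      (p : ℚ) ^ k * ∏ j ∈ Finset.Icc 1 k, ((p : ℚ) ^ (n - j + 1) - 1) / ((p : ℚ) ^ j - 1) := by
  have hp : 1 < p := (Fact.out : p.Prime).one_lt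
  have hp0 : (p : ℚ) ≠ 0 := by positivity
  have hpow (m : ℕ) : (p : ℚ) ^ (m + 1) - 1 ≠ 0 :=
    (sub_pos.2 (one_lt_pow₀ (by exact_mod_cast hp) m.succ_ne_zero)).ne'
  have he : (Pi.single (Fin.last n) 1 : Fin (n + 1) → ZMod p) ≠ 0 := by simp
  have count := congrArg (Nat.cast : ℕ → ℚ) (card_avoiding_mul (K := ZMod p) he k)
  rw [Nat.card_zmod, Module.finrank_fintype_fun_eq_card, Fintype.card_fin, Nat.cast_mul,
    Nat.cast_prod, Nat.cast_prod] at count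
  -- The reflection `i ↦ k - 1 - i` turns the factors `p ^ (k - i) - 1` into `p ^ (i + 1) - 1`.
  have bases : ∏ i ∈ Finset.range k, ((p ^ k - p ^ i : ℕ) : ℚ) =
      (∏ i ∈ Finset.range k, (p : ℚ) ^ i) * ∏ i ∈ Finset.range k, ((p : ℚ) ^ (i + 1) - 1) := by
    rw [← Finset.prod_range_reflect (fun i => (p : ℚ) ^ (i + 1) - 1), ← Finset.prod_mul_distrib]
    refine Finset.prod_congr rfl fun i hi => ?_
    have hi := Finset.mem_range.1 hi
    rw [Nat.cast_sub (Nat.pow_le_pow_right hp.le hi.le), mul_sub, ← pow_add,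
      show i + (k - 1 - i + 1) = k by omega]
    push_cast
    ring
  have tuples : ∏ i ∈ Finset.range k, ((p ^ (n + 1) - p ^ (i + 1) : ℕ) : ℚ) =
      (p : ℚ) ^ k * (∏ i ∈ Finset.range k, (p : ℚ) ^ i) *
        ∏ i ∈ Finset.range k, ((p : ℚ) ^ (n - i) - 1) := by
    have hc : (p : ℚ) ^ k = ∏ _i ∈ Finset.range k, (p : ℚ) := by simp
    rw [hc, ← Finset.prod_mul_distrib, ← Finset.prod_mul_distrib]
    refine Finset.prod_congr rfl fun i hi => ?_
    have hi := Finset.mem_range.1 hi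
    rw [Nat.cast_sub (Nat.pow_le_pow_right hp.le (by omega)), mul_sub, ← pow_succ', ← pow_add,
      show i + 1 + (n - i) = n + 1 by omega]
    push_cast
    ring
  have gauss : ∏ j ∈ Finset.Icc 1 k, ((p : ℚ) ^ (n - j + 1) - 1) / ((p : ℚ) ^ j - 1) =
      (∏ i ∈ Finset.range k, ((p : ℚ) ^ (n - i) - 1)) /
        ∏ i ∈ Finset.range k, ((p : ℚ) ^ (i + 1) - 1) := by
    rw [← Finset.prod_div_distrib, ← Finset.Ico_add_one_right_eq_Icc,
      Finset.prod_Ico_eq_prod_range]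
    refine Finset.prod_congr rfl fun i hi => ?_
    have hi := Finset.mem_range.1 hi
    rw [show n - (1 + i) + 1 = n - i by omega, add_comm 1 i]
  have hB : ∏ i ∈ Finset.range k, ((p : ℚ) ^ (i + 1) - 1) ≠ 0 :=
    Finset.prod_ne_zero_iff.2 fun i _ => hpow i
  have hQ : ∏ i ∈ Finset.range k, (p : ℚ) ^ i ≠ 0 :=
    Finset.prod_ne_zero_iff.2 fun i _ => pow_ne_zero i hp0
  rw [bases, tuples] at count
  rw [gauss, ← mul_div_assoc, eq_div_iff hB]
  refine mul_left_cancel₀ hQ ?_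
  linear_combination count
end

section
/- Let p be a prime, n ≥ 1 a natural number, and e = (0,…,0,1) the last standard basis vector of the vector space (ZMod p)^{n+1} over ZMod p. Consider the map sending an (n−1)-dimensional linear subspace L of (ZMod p)^{n+1} with e ∉ L to the n-dimensional subspace L + span(e). This map takes values in the set of n-dimensional subspaces of (ZMod p)^{n+1} containing e, is surjective onto that set, and every fiber has exactly p^{n−1} elements. -/
/-!
Let `e ≠ 0` be a vector of a subspace `M`. A subspace `L` with `e ∉ L` and `L + span(e) = M` is a
complement of `span(e)` in `M`, and such complements are exactly the kernels of the linear
functionals `φ` on `M` with `φ(e) = 1`, each complement coming from exactly one `φ`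
(`complementEquiv`). These functionals form a translate of the annihilator of `e` in the dual of
`M`, which has dimension `dim M - 1`; this counts the fibre (`natCard_dual_apply_eq_one`).
Since the count is positive, every fibre is nonempty.
-/

section

variable {K V : Type*} [Field K] [AddCommGroup V] [Module K V]

theorem exists_dual_apply_eq_one_of_notMem {L : Submodule K V} {e : V} (he : e ∉ L) :
    ∃ f : Module.Dual K V, f e = 1 ∧ ∀ x ∈ L, f x = 0 := by
  obtain ⟨f, hf, hL⟩ := Submodule.exists_le_ker_of_notMem he
  exact ⟨(f e)⁻¹ • f, by simp [hf], fun x hx => by simp [LinearMap.mem_ker.1 (hL hx)]⟩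

/-- The functionals on `M` normalised by `φ e = 1` correspond, through their kernels, to the
complements of `span(e)` in `M`. The kernel is viewed as a subspace of the ambient space. -/
noncomputable def complementEquiv (M : Submodule K V) (e : M) :
    {φ : Module.Dual K M // φ e = 1} ≃
      {L : Submodule K V // (e : V) ∉ L ∧ L ⊔ Submodule.span K {(e : V)} = M} := by
  refine Equiv.ofBijective (fun φ => ⟨(LinearMap.ker φ.1).map M.subtype, ?_, ?_⟩) ⟨?_, ?_⟩
  · rintro ⟨x, hx, hxe⟩
    have : x = e := Subtype.ext hxe
    subst this
    have h0 : φ.1 x = 0 := hx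
    exact one_ne_zero (φ.2.symm.trans h0)
  · apply le_antisymm
    · refine sup_le (Submodule.map_subtype_le _ _) ?_
      simp
    · intro x hx
      -- Decompose `x` as `(x - φ x • e) + φ x • e`.
      refine Submodule.mem_sup.2 ⟨_, ⟨⟨x, hx⟩ - φ.1 ⟨x, hx⟩ • e, ?_, rfl⟩, φ.1 ⟨x, hx⟩ • (e : V),
        Submodule.smul_mem _ _ (Submodule.mem_span_singleton_self _), ?_⟩
      · simp [φ.2]
      · simp
  · rintro ⟨φ, hφ⟩ ⟨ψ, hψ⟩ h
    have hk : LinearMap.ker φ = LinearMap.ker ψ :=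
      Submodule.map_injective_of_injective M.subtype_injective (Subtype.ext_iff.1 h)
    refine Subtype.ext (LinearMap.ext fun x => ?_)
    have hx : x - φ x • e ∈ LinearMap.ker φ := by simp [hφ]
    rw [hk, LinearMap.mem_ker, map_sub, map_smul, hψ, smul_eq_mul, mul_one, sub_eq_zero] at hx
    exact hx.symm
  · rintro ⟨L, heL, hM⟩
    obtain ⟨f, hfe, hfL⟩ := exists_dual_apply_eq_one_of_notMem heL
    refine ⟨⟨f.comp M.subtype, hfe⟩, Subtype.ext (le_antisymm ?_ ?_)⟩
    · rintro _ ⟨⟨x, hx⟩, hfx, rfl⟩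
      have hfx' : f x = 0 := hfx
      obtain ⟨l, hl, c, rfl⟩ : ∃ l ∈ L, ∃ c : K, l + c • (e : V) = x := by
        rw [← hM, Submodule.mem_sup] at hx
        obtain ⟨l, hl, z, hz, rfl⟩ := hx
        obtain ⟨c, rfl⟩ := Submodule.mem_span_singleton.1 hz
        exact ⟨l, hl, c, rfl⟩
      have hc : c = 0 := by simpa [hfL l hl, hfe] using hfx'
      simpa [hc] using hl
    · intro x hx
      have hxM : x ∈ M := hM ▸ Submodule.mem_sup_left hx
      exact ⟨⟨x, hxM⟩, hfL x hx, rfl⟩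

theorem natCard_dual_apply_eq_one [FiniteDimensional K V] {e : V} (he : e ≠ 0) :
    Nat.card {φ : Module.Dual K V // φ e = 1} = Nat.card K ^ (Module.finrank K V - 1) := by
  obtain ⟨φ₀, h₀, -⟩ := exists_dual_apply_eq_one_of_notMem (K := K) (L := ⊥) (e := e) (by simpa)
  let ev : Module.Dual K V →ₗ[K] K := Module.Dual.eval K V e
  have hev : ∀ φ, ev φ = φ e := fun _ => rfl
  -- Translation by `φ₀` identifies the functionals in question with the annihilator of `e`.
  let E : {φ : Module.Dual K V // φ e = 1} ≃ LinearMap.ker ev :=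
    (Equiv.subRight φ₀).subtypeEquiv fun φ => by
      simp [hev, h₀, sub_eq_zero]
  have hs : Function.Surjective ev := fun c => ⟨c • φ₀, by simp [hev, h₀]⟩
  have hr := LinearMap.finrank_range_add_finrank_ker ev
  rw [LinearMap.range_eq_top.2 hs, finrank_top, Module.finrank_self,
    Subspace.dual_finrank_eq] at hr
  rw [Nat.card_congr E, Module.natCard_eq_pow_finrank (K := K), ← hr, Nat.add_sub_cancel_left]

end

/-- For `n ≥ 1` and `e = (0,…,0,1) ∈ (ZMod p)^{n+1}`, the map
`L ↦ L + span(e)` sends `(n−1)`-dimensional subspaces not containing `e` to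
`n`-dimensional subspaces containing `e`, is surjective onto that set, and each
fiber has exactly `p^{n−1}` elements. -/
theorem stmt_4 (p n : ℕ) [Fact p.Prime] (hn : 1 ≤ n) :
    (∀ L : Submodule (ZMod p) (Fin (n + 1) → ZMod p),
        Module.finrank (ZMod p) L = n - 1 →
        Pi.single (Fin.last n) (1 : ZMod p) ∉ L →
        Pi.single (Fin.last n) (1 : ZMod p) ∈
            L ⊔ Submodule.span (ZMod p) {Pi.single (Fin.last n) (1 : ZMod p)} ∧
          Module.finrank (ZMod p)
            ↥(L ⊔ Submodule.span (ZMod p) {Pi.single (Fin.last n) (1 : ZMod p)}) = n) ∧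
    (∀ M : Submodule (ZMod p) (Fin (n + 1) → ZMod p),
        Module.finrank (ZMod p) M = n →
        Pi.single (Fin.last n) (1 : ZMod p) ∈ M →
        ∃ L : Submodule (ZMod p) (Fin (n + 1) → ZMod p),
          Module.finrank (ZMod p) L = n - 1 ∧
          Pi.single (Fin.last n) (1 : ZMod p) ∉ L ∧
          L ⊔ Submodule.span (ZMod p) {Pi.single (Fin.last n) (1 : ZMod p)} = M) ∧
    (∀ M : Submodule (ZMod p) (Fin (n + 1) → ZMod p),
        Module.finrank (ZMod p) M = n →
        Pi.single (Fin.last n) (1 : ZMod p) ∈ M →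
        Nat.card {L : Submodule (ZMod p) (Fin (n + 1) → ZMod p) //
          Module.finrank (ZMod p) L = n - 1 ∧
          Pi.single (Fin.last n) (1 : ZMod p) ∉ L ∧
          L ⊔ Submodule.span (ZMod p) {Pi.single (Fin.last n) (1 : ZMod p)} = M} =
            p ^ (n - 1)) := by
  have he0 : (Pi.single (Fin.last n) (1 : ZMod p) : Fin (n + 1) → ZMod p) ≠ 0 := by simp
  generalize (Pi.single (Fin.last n) (1 : ZMod p) : Fin (n + 1) → ZMod p) = e at he0 ⊢
  have card : ∀ M : Submodule (ZMod p) (Fin (n + 1) → ZMod p),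
      Module.finrank (ZMod p) M = n → e ∈ M →
      Nat.card {L : Submodule (ZMod p) (Fin (n + 1) → ZMod p) //
        Module.finrank (ZMod p) L = n - 1 ∧ e ∉ L ∧
          L ⊔ Submodule.span (ZMod p) {e} = M} = p ^ (n - 1) := by
    intro M hM heM
    -- The dimension condition on `L` follows from the other two.
    have hiff : ∀ L : Submodule (ZMod p) (Fin (n + 1) → ZMod p),
        (Module.finrank (ZMod p) L = n - 1 ∧ e ∉ L ∧ L ⊔ Submodule.span (ZMod p) {e} = M) ↔
          (e ∉ L ∧ L ⊔ Submodule.span (ZMod p) {e} = M) := by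
      refine fun L => ⟨And.right, fun h => ⟨?_, h⟩⟩
      have := Submodule.finrank_sup_span_singleton h.1
      rw [h.2, hM] at this
      omega
    rw [Nat.card_congr (Equiv.subtypeEquivRight hiff),
      ← Nat.card_congr (complementEquiv M ⟨e, heM⟩),
      natCard_dual_apply_eq_one (by simpa using he0), hM, Nat.card_zmod]
  refine ⟨fun L hL heL => ⟨?_, ?_⟩, fun M hM heM => ?_, card⟩
  · exact Submodule.mem_sup_right (Submodule.mem_span_singleton_self e)
  · rw [Submodule.finrank_sup_span_singleton heL, hL]
    omega
  · have hpos : 0 < p ^ (n - 1) := pow_pos (Fact.out : p.Prime).pos _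
    rw [← card M hM heM] at hpos
    obtain ⟨⟨L, hL⟩⟩ := (Nat.card_pos_iff.1 hpos).1
    exact ⟨L, hL⟩
end

section
/- Let ι be a type, let M = (ι →₀ ℕ) be the free commutative additive monoid on ι, let N be a commutative additive monoid, and let u : M →+ N and r : N →+ M be additive monoid homomorphisms such that r(u(x)) = n • x for all x ∈ M, where n is a fixed positive natural number. If x, y ∈ M and v ∈ N satisfy u(x) + v = u(y) + v, then x = y. (Consequently, the map induced by u on Grothendieck group completions is injective.) -/
/-- Cancellation in the free commutative monoid in the presence of a retraction up to
multiplication by `n > 0`: if `u : (ι →₀ ℕ) →+ N` admits `r : N →+ (ι →₀ ℕ)` with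
`r ∘ u = n • ·`, then `u x + v = u y + v` forces `x = y`; hence `u` induces an
injection on Grothendieck group completions. -/
theorem stmt_10 (ι N : Type*) [AddCommMonoid N]
    (u : (ι →₀ ℕ) →+ N) (r : N →+ (ι →₀ ℕ)) (n : ℕ) (hn : 0 < n)
    (hru : ∀ x : ι →₀ ℕ, r (u x) = n • x)
    (x y : ι →₀ ℕ) (v : N) (h : u x + v = u y + v) : x = y := by
  have h1 : n • x = n • y := by
    have h2 := congrArg r h
    rw [map_add, map_add, hru, hru] at h2
    exact add_right_cancel h2
  ext i
  have h3 := DFunLike.congr_fun h1 i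
  simp only [Finsupp.smul_apply, smul_eq_mul] at h3
  exact Nat.eq_of_mul_eq_mul_left hn h3
end
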